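/- In the discrete HAD process on Ω_{L,N} with rate parameters x_1,…,x_L > 0, the stationary distribution is π(η) = (N!/(x_1+⋯+x_L)^N)·∏_{j=1}^{L} x_j^{η_j}/η_j!, and for any fixed site ℓ and any 0 ≤ m ≤ N, the stationary probability that site ℓ contains exactly m particles equals the binomial probability C(N,m)·p^m·(1−p)^{N−m} with p = x_ℓ/(x_1+⋯+x_L); that is, ∑_{η ∈ Ω_{L,N}, η_ℓ = m} π(η) = C(N,m)·(x_ℓ/(x_1+⋯+x_L))^m·(1 − x_ℓ/(x_1+⋯+x_L))^{N−m}. -/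

import Mathlib

open scoped Classical

namespace LRMP

/-- A rate function: `u m n` is positive when the departure site is occupied
(`m ≥ 1`) and zero when it is empty (`m = 0`). -/
def IsRate (u : ℕ → ℕ → ℝ) : Prop :=
  (∀ m n : ℕ, 1 ≤ m → 0 < u m n) ∧ ∀ n : ℕ, u 0 n = 0

/-- The configuration `η^{k,ℓ}`: one particle moved from site `k` to site `ℓ`. -/
def move (L : ℕ) (η : ZMod L → ℕ) (k ℓ : ZMod L) : ZMod L → ℕ :=
  fun a => if a = k then η a - 1 else if a = ℓ then η a + 1 else η a

/-- Every site strictly between `k` and `ℓ`, moving clockwise from `k`, is empty in `η`. -/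
def RightClear (L : ℕ) (η : ZMod L → ℕ) (k ℓ : ZMod L) : Prop :=
  ∀ i : ℕ, 0 < i → i < (ℓ - k).val → η (k + (i : ZMod L)) = 0

/-- Every site strictly between `k` and `ℓ`, moving counterclockwise from `k`, is empty in `η`. -/
def LeftClear (L : ℕ) (η : ZMod L → ℕ) (k ℓ : ZMod L) : Prop :=
  ∀ i : ℕ, 0 < i → i < (k - ℓ).val → η (k - (i : ZMod L)) = 0

/-- The total rate of the transition `η → η^{k,ℓ}` in the PALRMP with rate function `u`,
rate parameters `x` and asymmetry parameter `q`: a clockwise (right) hop contributes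
`x ℓ * u (η k) (η ℓ)` and a counterclockwise (left) hop contributes `q * x ℓ * u (η k) (η ℓ)`. -/
noncomputable def hopRate (L : ℕ) (u : ℕ → ℕ → ℝ) (x : ZMod L → ℝ) (q : ℝ)
    (η : ZMod L → ℕ) (k ℓ : ZMod L) : ℝ :=
  (if k ≠ ℓ ∧ 1 ≤ η k ∧ RightClear L η k ℓ then x ℓ * u (η k) (η ℓ) else 0) +
  (if k ≠ ℓ ∧ 1 ≤ η k ∧ LeftClear L η k ℓ then q * (x ℓ * u (η k) (η ℓ)) else 0)

/-- The incoming probability current into `η`: the sum over pairs `(k, ℓ)` of the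
probability current due to the transition into `η` in which a particle moves from
site `k` to site `ℓ` (coming from the configuration `η^{ℓ,k} = move L η ℓ k`). -/
noncomputable def inflow (L : ℕ) [NeZero L] (u : ℕ → ℕ → ℝ) (x : ZMod L → ℝ) (q : ℝ)
    (π : (ZMod L → ℕ) → ℝ) (η : ZMod L → ℕ) : ℝ :=
  ∑ k : ZMod L, ∑ ℓ : ZMod L,
    if 1 ≤ η ℓ then π (move L η ℓ k) * hopRate L u x q (move L η ℓ k) k ℓ else 0

/-- The outgoing probability current out of `η`. -/
noncomputable def outflow (L : ℕ) [NeZero L] (u : ℕ → ℕ → ℝ) (x : ZMod L → ℝ) (q : ℝ)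
    (π : (ZMod L → ℕ) → ℝ) (η : ZMod L → ℕ) : ℝ :=
  ∑ k : ZMod L, ∑ ℓ : ZMod L, π η * hopRate L u x q η k ℓ

/-- `π` satisfies the master (balance) equation of the PALRMP on `Ω_{L,N}`:
for every configuration `η` with `N` particles, the incoming probability current
equals the outgoing probability current. -/
def IsStationary (L : ℕ) [NeZero L] (N : ℕ) (u : ℕ → ℕ → ℝ) (x : ZMod L → ℝ) (q : ℝ)
    (π : (ZMod L → ℕ) → ℝ) : Prop :=
  ∀ η : ZMod L → ℕ, (∑ a, η a) = N → inflow L u x q π η = outflow L u x q π η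

/-- The stationary distribution corresponding to the rate `u` in the PALRMP with
asymmetry parameter `q` is factorised, with one-point function `f`: for every
`L ≥ 2`, `N ≥ 1` and all positive rate parameters `x`, the factorised distribution
`η ↦ ∏_ℓ f (x ℓ) (η ℓ)` (up to normalisation) is stationary. -/
def FactorisedPALRMP (u : ℕ → ℕ → ℝ) (q : ℝ) (f : ℝ → ℕ → ℝ) : Prop :=
  (∀ (x : ℝ) (n : ℕ), 0 < x → 0 < f x n) ∧
  ∀ (L N : ℕ) [NeZero L], 2 ≤ L → 1 ≤ N →
    ∀ x : ZMod L → ℝ, (∀ ℓ, 0 < x ℓ) →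
      IsStationary L N u x q (fun η => ∏ ℓ, f (x ℓ) (η ℓ))

/-- The stationary distribution corresponding to the rate `u` in the homogeneous
PALRMP (all rate parameters equal to `1`) with asymmetry parameter `q` is factorised,
with one-point function `f`. -/
def FactorisedHomog (u : ℕ → ℕ → ℝ) (q : ℝ) (f : ℕ → ℝ) : Prop :=
  (∀ n : ℕ, 0 < f n) ∧
  ∀ (L N : ℕ) [NeZero L], 2 ≤ L → 1 ≤ N →
    IsStationary L N u (fun _ => (1 : ℝ)) q (fun η => ∏ ℓ, f (η ℓ))

end LRMP

namespace LRMP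

/-!
Let the hop rate onto `ℓ` be `x ℓ * v (η ℓ)`, and weight `η` by `∏ j, g j (η j)` with
`g j (n + 1) = x j * v n * g j n`. If a hop from `k` to `ℓ` produces `η`, the weight of its starting
configuration times its rate is the weight of `η` times `x k * v (η k)`, which does not depend on
`ℓ`. So the current into `η` through right hops counts, for each site `k`, the nearest occupied
sites clockwise of `k`, whereas the current out of `η` counts, with the same factor, the nearest
occupied sites counterclockwise of `k`. Each count is `1` if some site other than `k` is occupied
and `0` otherwise. Left hops balance in the same way, with the two directions exchanged.

For `v n = 1 / (n + 1)` the weight is `∏ j, x j ^ η j / (η j)!`, and fixing the occupation of one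
site leaves a sum over the remaining sites that the multinomial theorem evaluates.
-/

section Multinomial

variable {ι : Type*} [DecidableEq ι]

theorem sum_piAntidiag_prod_pow_div_factorial {K : Type*} [Field K] [CharZero K]
    (s : Finset ι) (x : ι → K) (n : ℕ) :
    ∑ η ∈ s.piAntidiag n, ∏ j ∈ s, x j ^ η j / (η j).factorial =
      (∑ j ∈ s, x j) ^ n / n.factorial := by
  rw [Finset.sum_pow_eq_sum_piAntidiag, Finset.sum_div]
  refine Finset.sum_congr rfl fun η hη => ?_
  have hfact : (∏ j ∈ s, ((η j).factorial : K)) * Nat.multinomial s η = n.factorial := by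
    rw [← (Finset.mem_piAntidiag.mp hη).1]
    exact_mod_cast Nat.multinomial_spec s η
  have hprod : ∏ j ∈ s, ((η j).factorial : K) ≠ 0 :=
    Finset.prod_ne_zero_iff.mpr fun j _ => Nat.cast_ne_zero.mpr (η j).factorial_ne_zero
  rw [Finset.prod_div_distrib, div_eq_div_iff hprod (Nat.cast_ne_zero.mpr n.factorial_ne_zero),
    ← hfact]
  ring

theorem sum_piAntidiag_insert_filter_eq {M : Type*} [CommSemiring M] {s : Finset ι} {i : ι}
    (hi : i ∉ s) (g : ι → ℕ → M) {m n : ℕ} (hmn : m ≤ n) :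
    ∑ η ∈ (insert i s).piAntidiag n with η i = m, ∏ j ∈ insert i s, g j (η j) =
      g i m * ∑ η ∈ s.piAntidiag (n - m), ∏ j ∈ s, g j (η j) := by
  have hne : ∀ j ∈ s, j ≠ i := fun j hj h => hi (h ▸ hj)
  have sum_update (η : ι → ℕ) (a : ℕ) : ∑ j ∈ s, Function.update η i a j = ∑ j ∈ s, η j :=
    Finset.sum_congr rfl fun j hj => Function.update_of_ne (hne j hj) ..
  rw [Finset.mul_sum]
  refine Finset.sum_bij' (fun η _ => Function.update η i 0) (fun η _ => Function.update η i m)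
    ?_ ?_ ?_ ?_ ?_
  · intro η hη
    simp only [Finset.mem_filter, Finset.mem_piAntidiag, Finset.sum_insert hi,
      Finset.mem_insert] at hη
    refine Finset.mem_piAntidiag.mpr ⟨by rw [sum_update]; omega, fun j hj => ?_⟩
    have hji : j ≠ i := by rintro rfl; simp at hj
    rw [Function.update_of_ne hji] at hj
    exact (hη.1.2 j hj).resolve_left hji
  · intro η hη
    obtain ⟨hsum, hsupp⟩ := Finset.mem_piAntidiag.mp hη
    simp only [Finset.mem_filter, Finset.mem_piAntidiag, Finset.sum_insert hi, Finset.mem_insert,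
      Function.update_self, sum_update, and_true]
    refine ⟨by rw [hsum]; omega, fun j hj => or_iff_not_imp_left.mpr fun hji => hsupp j ?_⟩
    rwa [Function.update_of_ne hji] at hj
  · intro η hη
    simp [← (Finset.mem_filter.mp hη).2]
  · intro η hη
    have hηi : η i = 0 := not_imp_comm.mp ((Finset.mem_piAntidiag.mp hη).2 i) hi
    simp [← hηi]
  · intro η hη
    rw [Finset.prod_insert hi, (Finset.mem_filter.mp hη).2]
    congr 1
    exact Finset.prod_congr rfl fun j hj => by rw [Function.update_of_ne (hne j hj)]

theorem sum_piAntidiag_univ_filter_prod_pow_div_factorial {K : Type*} [Field K] [CharZero K]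
    [Fintype ι] (x : ι → K) (i : ι) {m n : ℕ} (hmn : m ≤ n) :
    ∑ η ∈ Finset.univ.piAntidiag n with η i = m, ∏ j, x j ^ η j / (η j).factorial =
      x i ^ m / m.factorial * ((∑ j, x j - x i) ^ (n - m) / (n - m).factorial) := by
  have hi : i ∉ Finset.univ.erase i := Finset.notMem_erase i _
  rw [← Finset.insert_erase (Finset.mem_univ i),
    sum_piAntidiag_insert_filter_eq hi (fun j a => x j ^ a / (a.factorial : K)) hmn,
    sum_piAntidiag_prod_pow_div_factorial, Finset.sum_insert hi, add_sub_cancel_left]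

theorem filter_piFinset_range_sum_eq [Fintype ι] (n : ℕ) (p : (ι → ℕ) → Prop) [DecidablePred p] :
    (Fintype.piFinset fun _ => Finset.range (n + 1)).filter (fun η => (∑ j, η j) = n ∧ p η) =
      (Finset.univ.piAntidiag n).filter p := by
  ext η
  simp only [Finset.mem_filter, Fintype.mem_piFinset, Finset.mem_range, Finset.mem_piAntidiag,
    Finset.mem_univ, implies_true, and_true, and_iff_right_iff_imp, Order.lt_add_one_iff]
  rintro ⟨rfl, -⟩ j
  exact Finset.single_le_sum (fun _ _ => Nat.zero_le _) (Finset.mem_univ j)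

theorem factorial_div_pow_mul_eq_choose_mul {K : Type*} [Field K] [CharZero K] {S : K}
    (hS : S ≠ 0) (a : K) {m n : ℕ} (hmn : m ≤ n) :
    (n.factorial : K) / S ^ n *
        (a ^ m / m.factorial * ((S - a) ^ (n - m) / (n - m).factorial)) =
      n.choose m * (a / S) ^ m * (1 - a / S) ^ (n - m) := by
  rw [Nat.cast_choose K hmn, one_sub_div hS, div_pow, div_pow, ← pow_mul_pow_sub S hmn]
  field_simp

end Multinomial

section Clear

variable {L : ℕ} {η η' : ZMod L → ℕ} {a b c k ℓ : ZMod L}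

theorem leftClear_iff_rightClear_neg :
    LeftClear L η k ℓ ↔ RightClear L (fun a => η (-a)) (-k) (-ℓ) := by
  simp only [LeftClear, RightClear, neg_sub_neg, neg_add, neg_neg, ← sub_eq_add_neg]

theorem add_natCast_ne_self (k : ZMod L) {i : ℕ} (hpos : 0 < i) (hlt : i < L) :
    k + (i : ZMod L) ≠ k := by
  rw [ne_eq, add_eq_left, ZMod.natCast_eq_zero_iff]
  exact Nat.not_dvd_of_pos_of_lt hpos hlt

variable [NeZero L]

theorem leftClear_iff_rightClear_swap : LeftClear L η k ℓ ↔ RightClear L η ℓ k := by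
  have reflect (i : ℕ) (hi : i < (k - ℓ).val) :
      k - (i : ZMod L) = ℓ + (((k - ℓ).val - i : ℕ) : ZMod L) := by
    rw [Nat.cast_sub hi.le, ZMod.natCast_zmod_val]
    ring
  constructor
  · intro h i hpos hlt
    have hempty := h ((k - ℓ).val - i) (by omega) (by omega)
    rwa [reflect _ (by omega), Nat.sub_sub_self hlt.le] at hempty
  · intro h i hpos hlt
    rw [reflect i hlt]
    exact h _ (by omega) (by omega)

theorem rightClear_congr (h : ∀ a, a ≠ k → a ≠ ℓ → η a = η' a) :
    RightClear L η k ℓ ↔ RightClear L η' k ℓ := by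
  refine forall₃_congr fun i hpos hlt => ?_
  have hiL : i < L := hlt.trans (ZMod.val_lt _)
  rw [h _ (add_natCast_ne_self k hpos hiL)]
  rintro rfl
  rw [add_sub_cancel_left, ZMod.val_cast_of_lt hiL] at hlt
  exact hlt.false

theorem RightClear.val_sub_le (h : RightClear L η a c) (hab : a ≠ b) (hb : 1 ≤ η b) :
    (c - a).val ≤ (b - a).val := by
  by_contra! hlt
  have hpos : 0 < (b - a).val := ZMod.val_pos.mpr (sub_ne_zero.mpr hab.symm)
  have hb0 := h _ hpos hlt
  rw [ZMod.natCast_zmod_val, add_sub_cancel] at hb0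
  omega

end Clear

section Neighbours

variable {L : ℕ}

/-- `b` is the nearest occupied site other than `a`, clockwise of `a`. It is where a right hop
from `a` that has just produced `η` landed, and where a left hop onto `a` can start. -/
def IsNextRight (η : ZMod L → ℕ) (a b : ZMod L) : Prop :=
  a ≠ b ∧ 1 ≤ η b ∧ RightClear L η a b

/-- `b` is the nearest occupied site other than `a`, counterclockwise of `a`. It is where a left
hop from `a` that has just produced `η` landed, and where a right hop onto `a` can start. -/
def IsNextLeft (η : ZMod L → ℕ) (a b : ZMod L) : Prop :=
  a ≠ b ∧ 1 ≤ η b ∧ LeftClear L η a b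

variable [NeZero L]

theorem existsUnique_isNextRight {η : ZMod L → ℕ} {a : ZMod L} (h : ∃ b, a ≠ b ∧ 1 ≤ η b) :
    ∃! b, IsNextRight η a b := by
  obtain ⟨b, ⟨hab, hb⟩, hmin⟩ :=
    Set.exists_min_image {b | a ≠ b ∧ 1 ≤ η b} (fun b => (b - a).val) (Set.toFinite _) h
  have hclear : RightClear L η a b := by
    intro i hpos hlt
    have hiL : i < L := hlt.trans (ZMod.val_lt _)
    by_contra hocc
    have hle := hmin (a + i)
      ⟨(add_natCast_ne_self a hpos hiL).symm, Nat.one_le_iff_ne_zero.mpr hocc⟩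
    rw [add_sub_cancel_left, ZMod.val_cast_of_lt hiL] at hle
    exact hlt.not_ge hle
  refine ⟨b, ⟨hab, hb, hclear⟩, fun c ⟨hac, hc, hclear'⟩ => ?_⟩
  exact sub_left_injective <| ZMod.val_injective L <|
    (hclear'.val_sub_le hab hb).antisymm (hclear.val_sub_le hac hc)

theorem sum_isNextRight (η : ZMod L → ℕ) (a : ZMod L) :
    ∑ b, (if IsNextRight η a b then (1 : ℝ) else 0) = if ∃ b, a ≠ b ∧ 1 ≤ η b then 1 else 0 := by
  split_ifs with h
  · rw [Finset.sum_boole, (Fintype.existsUnique_iff_card_one _).mp (existsUnique_isNextRight h),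
      Nat.cast_one]
  · exact Finset.sum_eq_zero fun b _ => if_neg fun hb => h ⟨b, hb.1, hb.2.1⟩

theorem sum_isNextLeft (η : ZMod L → ℕ) (a : ZMod L) :
    ∑ b, (if IsNextLeft η a b then (1 : ℝ) else 0) = if ∃ b, a ≠ b ∧ 1 ≤ η b then 1 else 0 := by
  have reflect (b : ZMod L) : IsNextLeft η a (-b) ↔ IsNextRight (fun c => η (-c)) (-a) b := by
    rw [IsNextLeft, IsNextRight, leftClear_iff_rightClear_neg, neg_neg, ne_eq, ne_eq,
      neg_eq_iff_eq_neg]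
  have hex : (∃ b, -a ≠ b ∧ 1 ≤ η (-b)) ↔ ∃ b, a ≠ b ∧ 1 ≤ η b := by
    rw [← (Equiv.neg (ZMod L)).exists_congr_right]
    simp
  rw [← Equiv.sum_comp (Equiv.neg (ZMod L))]
  simp only [Equiv.neg_apply, reflect, sum_isNextRight, hex]

end Neighbours

section Currents

variable {L : ℕ}

/-- The rate function `u m n` of a process in which the rate of a hop from an occupied site depends
only on the occupation `n` of the target site; `v n = 1 / (n + 1)` is the discrete HAD process. -/
def targetRate (v : ℕ → ℝ) (m n : ℕ) : ℝ :=
  if m = 0 then 0 else v n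

theorem move_of_ne {η : ZMod L → ℕ} {a k ℓ : ZMod L} (hk : a ≠ k) (hℓ : a ≠ ℓ) :
    move L η k ℓ a = η a := by
  simp [move, hk, hℓ]

theorem move_source (η : ZMod L → ℕ) (k ℓ : ZMod L) : move L η k ℓ k = η k - 1 := by
  simp [move]

theorem move_target {k ℓ : ZMod L} (η : ZMod L → ℕ) (hkℓ : k ≠ ℓ) :
    move L η k ℓ ℓ = η ℓ + 1 := by
  simp [move, hkℓ.symm]

variable [NeZero L]

theorem prod_move_mul {R : Type*} [CommSemiring R] {g w : ZMod L → ℕ → R}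
    (hg : ∀ j n, g j (n + 1) = w j n * g j n) {η : ZMod L → ℕ} {k ℓ : ZMod L} (hkℓ : k ≠ ℓ)
    (hℓ : 1 ≤ η ℓ) :
    (∏ j, g j (move L η ℓ k j)) * w ℓ (η ℓ - 1) = (∏ j, g j (η j)) * w k (η k) := by
  have hrest : ∏ j ∈ {k, ℓ}ᶜ, g j (move L η ℓ k j) = ∏ j ∈ {k, ℓ}ᶜ, g j (η j) := by
    refine Finset.prod_congr rfl fun j hj => ?_
    simp only [Finset.mem_compl, Finset.mem_insert, Finset.mem_singleton, not_or] at hj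
    rw [move_of_ne hj.2 hj.1]
  obtain ⟨n, hn⟩ := Nat.exists_eq_add_of_le' hℓ
  rw [← Finset.prod_mul_prod_compl {k, ℓ}, ← Finset.prod_mul_prod_compl {k, ℓ} fun j => g j (η j),
    hrest, Finset.prod_pair hkℓ, Finset.prod_pair hkℓ, move_target η hkℓ.symm, move_source, hn,
    Nat.add_sub_cancel, hg, hg]
  ring

theorem hopRate_targetRate (v : ℕ → ℝ) (x : ZMod L → ℝ) (q : ℝ) (η : ZMod L → ℕ)
    (k ℓ : ZMod L) :
    hopRate L (targetRate v) x q η k ℓ = x ℓ * v (η ℓ) *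
      ((if IsNextLeft η ℓ k then 1 else 0) + q * if IsNextRight η ℓ k then 1 else 0) := by
  simp only [hopRate, IsNextLeft, IsNextRight, leftClear_iff_rightClear_swap, ne_comm (a := ℓ)]
  rcases Nat.eq_zero_or_pos (η k) with hk | hk
  · simp [hk]
  · rw [targetRate, if_neg hk.ne']
    split_ifs <;> ring

theorem hopRate_targetRate_move (v : ℕ → ℝ) (x : ZMod L → ℝ) (q : ℝ) {η : ZMod L → ℕ}
    {k ℓ : ZMod L} (hkℓ : k ≠ ℓ) (hℓ : 1 ≤ η ℓ) :
    hopRate L (targetRate v) x q (move L η ℓ k) k ℓ = x ℓ * v (η ℓ - 1) *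
      ((if IsNextRight η k ℓ then 1 else 0) + q * if IsNextLeft η k ℓ then 1 else 0) := by
  have hclear : RightClear L (move L η ℓ k) k ℓ ↔ RightClear L η k ℓ :=
    rightClear_congr fun a hk hℓ => move_of_ne hℓ hk
  have hclear' : RightClear L (move L η ℓ k) ℓ k ↔ RightClear L η ℓ k :=
    rightClear_congr fun a hℓ hk => move_of_ne hℓ hk
  simp only [hopRate_targetRate, IsNextLeft, IsNextRight, leftClear_iff_rightClear_swap, hclear,
    hclear', move_source, move_target η hkℓ.symm, hkℓ, hkℓ.symm, hℓ, ne_eq, not_false_eq_true,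
    true_and, Nat.le_add_left]

theorem outflow_targetRate (v : ℕ → ℝ) (x : ZMod L → ℝ) (q : ℝ) (π : (ZMod L → ℕ) → ℝ)
    (η : ZMod L → ℕ) :
    outflow L (targetRate v) x q π η =
      ∑ a, π η * (x a * v (η a)) * ((1 + q) * if ∃ b, a ≠ b ∧ 1 ≤ η b then 1 else 0) := by
  rw [outflow, Finset.sum_comm]
  simp only [hopRate_targetRate, ← mul_assoc, ← Finset.mul_sum, Finset.sum_add_distrib,
    sum_isNextLeft, sum_isNextRight, one_add_mul]

theorem inflow_targetRate {v : ℕ → ℝ} {x : ZMod L → ℝ} {g : ZMod L → ℕ → ℝ}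
    (hg : ∀ j n, g j (n + 1) = x j * v n * g j n) (q : ℝ) (η : ZMod L → ℕ) :
    inflow L (targetRate v) x q (fun η => ∏ j, g j (η j)) η =
      ∑ a, (∏ j, g j (η j)) * (x a * v (η a)) *
        ((1 + q) * if ∃ b, a ≠ b ∧ 1 ≤ η b then 1 else 0) := by
  have hterm (k ℓ : ZMod L) :
      (if 1 ≤ η ℓ then
        (∏ j, g j (move L η ℓ k j)) * hopRate L (targetRate v) x q (move L η ℓ k) k ℓ else 0) =
      (∏ j, g j (η j)) * (x k * v (η k)) *
        ((if IsNextRight η k ℓ then 1 else 0) + q * if IsNextLeft η k ℓ then 1 else 0) := by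
    by_cases hℓ : 1 ≤ η ℓ
    · by_cases hkℓ : k = ℓ
      · simp [hkℓ, hopRate, IsNextRight, IsNextLeft]
      · rw [if_pos hℓ, hopRate_targetRate_move v x q hkℓ hℓ, ← mul_assoc,
          prod_move_mul (w := fun j n => x j * v n) hg hkℓ hℓ]
    · simp [hℓ, IsNextRight, IsNextLeft]
  simp only [inflow, hterm, ← Finset.mul_sum, Finset.sum_add_distrib, sum_isNextLeft,
    sum_isNextRight, one_add_mul]

theorem IsStationary.const_mul {N : ℕ} {u : ℕ → ℕ → ℝ} {x : ZMod L → ℝ} {q : ℝ}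
    {π : (ZMod L → ℕ) → ℝ} (h : IsStationary L N u x q π) (c : ℝ) :
    IsStationary L N u x q fun η => c * π η := by
  intro η hη
  have hbalance := congrArg (c * ·) (h η hη)
  simpa only [inflow, outflow, Finset.mul_sum, mul_ite, mul_zero, mul_assoc] using hbalance

theorem isStationary_targetRate_prod {v : ℕ → ℝ} {x : ZMod L → ℝ} {g : ZMod L → ℕ → ℝ}
    (hg : ∀ j n, g j (n + 1) = x j * v n * g j n) (N : ℕ) (q : ℝ) :
    IsStationary L N (targetRate v) x q fun η => ∏ j, g j (η j) :=
  fun η _ => (inflow_targetRate hg q η).trans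
    (outflow_targetRate v x q (fun η => ∏ j, g j (η j)) η).symm

end Currents

theorem discrete_HAD_general (L N : ℕ) [NeZero L] (x : ZMod L → ℝ) (q : ℝ)
    (hx : ∑ j, x j ≠ 0) :
    IsStationary L N (fun m n => if m = 0 then 0 else 1 / ((n : ℝ) + 1)) x q
      (fun η => (N.factorial : ℝ) / (∑ j, x j) ^ N * ∏ j, x j ^ η j / (η j).factorial) ∧
    ∀ (ℓ : ZMod L) (m : ℕ), m ≤ N →
      ∑ η ∈ Finset.filter (fun η : ZMod L → ℕ => (∑ a, η a) = N ∧ η ℓ = m)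
          (Fintype.piFinset fun _ : ZMod L => Finset.range (N + 1)),
        (N.factorial : ℝ) / (∑ j, x j) ^ N * ∏ j, x j ^ η j / (η j).factorial
      = (N.choose m : ℝ) * (x ℓ / ∑ j, x j) ^ m * (1 - x ℓ / ∑ j, x j) ^ (N - m) := by
  have weight_succ (j : ZMod L) (n : ℕ) : x j ^ (n + 1) / ((n + 1).factorial : ℝ) =
      x j * (1 / ((n : ℝ) + 1)) * (x j ^ n / n.factorial) := by
    rw [Nat.factorial_succ]
    push_cast
    field_simp
    ring
  have hstat := isStationary_targetRate_prod (v := fun n => 1 / ((n : ℝ) + 1))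
    (g := fun j n => x j ^ n / n.factorial) weight_succ N q
  refine ⟨hstat.const_mul _, fun ℓ m hm => ?_⟩
  rw [← Finset.mul_sum, filter_piFinset_range_sum_eq,
    sum_piAntidiag_univ_filter_prod_pow_div_factorial x ℓ hm,
    factorial_div_pow_mul_eq_choose_mul hx (x ℓ) hm]

/-- the discrete HAD process (TALRMP with `u (m, n) = 1 / (n + 1)` for
`m ≥ 1`) has stationary distribution
`π η = (N! / (x 1 + ⋯ + x L) ^ N) * ∏_j x j ^ η j / (η j)!`, and under `π` the number of
particles at any fixed site `ℓ` is binomial with parameters `N` and `x ℓ / ∑ x`. -/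
theorem discrete_HAD
    (L N : ℕ) [NeZero L] (hL : 2 ≤ L) (hN : 1 ≤ N)
    (x : ZMod L → ℝ) (hx : ∀ ℓ, 0 < x ℓ) :
    IsStationary L N (fun m n => if m = 0 then 0 else 1 / ((n : ℝ) + 1)) x 0
      (fun η => (N.factorial : ℝ) / (∑ j, x j) ^ N * ∏ j, x j ^ η j / (η j).factorial) ∧
    ∀ (ℓ : ZMod L) (m : ℕ), m ≤ N →
      ∑ η ∈ Finset.filter (fun η : ZMod L → ℕ => (∑ a, η a) = N ∧ η ℓ = m)
          (Fintype.piFinset fun _ : ZMod L => Finset.range (N + 1)),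
        (N.factorial : ℝ) / (∑ j, x j) ^ N * ∏ j, x j ^ η j / (η j).factorial
      = (N.choose m : ℝ) * (x ℓ / ∑ j, x j) ^ m * (1 - x ℓ / ∑ j, x j) ^ (N - m) := by
  exact discrete_HAD_general L N x 0 (Finset.sum_pos (fun j _ => hx j) Finset.univ_nonempty).ne'

end LRMP
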